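/- For all real numbers α, β, γ, δ, setting U := e^{iα}·Rz(β)·Ry(γ)·Rz(δ), P := diag(1, e^{iα}), A := Rz(β)·Ry(γ/2), B := Ry(−γ/2)·Rz(−(δ+β)/2), and C := Rz((δ−β)/2), the 4×4 identity C(U) = (P ⊗ A)·CNOT·(I₂ ⊗ B)·CNOT·(I₂ ⊗ C) holds. -/

import Mathlib

open Matrix Complex Kronecker

noncomputable section

/-- Rz(θ) := diag(e^{-iθ/2}, e^{iθ/2}) -/
def Rz (θ : ℝ) : Matrix (Fin 2) (Fin 2) ℂ :=
  !![Complex.exp (-((θ : ℂ)/2) * Complex.I), 0; 0, Complex.exp (((θ : ℂ)/2) * Complex.I)]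

/-- Ry(θ) := [[cos(θ/2), -sin(θ/2)],[sin(θ/2), cos(θ/2)]] -/
def Ry (θ : ℝ) : Matrix (Fin 2) (Fin 2) ℂ :=
  !![(Real.cos (θ/2) : ℂ), -(Real.sin (θ/2) : ℂ);
     (Real.sin (θ/2) : ℂ),  (Real.cos (θ/2) : ℂ)]

/-- Pauli X -/
def X : Matrix (Fin 2) (Fin 2) ℂ := !![0, 1; 1, 0]

/-- The controlled-U gate: block-diagonal diag(I₂, U) on ℂ²⊗ℂ²
(first factor = control, basis ordering |00⟩,|01⟩,|10⟩,|11⟩). -/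
def ctrl (U : Matrix (Fin 2) (Fin 2) ℂ) : Matrix (Fin 2 × Fin 2) (Fin 2 × Fin 2) ℂ :=
  Matrix.of fun p q =>
    if p.1 = 0 ∧ q.1 = 0 then (1 : Matrix (Fin 2) (Fin 2) ℂ) p.2 q.2
    else if p.1 = 1 ∧ q.1 = 1 then U p.2 q.2
    else 0

/-- CNOT = diag(I₂, X). -/
def CNOT : Matrix (Fin 2 × Fin 2) (Fin 2 × Fin 2) ℂ := ctrl X

/-- Block-diagonal matrix. -/
def blk (M N : Matrix (Fin 2) (Fin 2) ℂ) : Matrix (Fin 2 × Fin 2) (Fin 2 × Fin 2) ℂ :=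
  Matrix.of fun p q =>
    if p.1 = 0 ∧ q.1 = 0 then M p.2 q.2
    else if p.1 = 1 ∧ q.1 = 1 then N p.2 q.2
    else 0

lemma ctrl_eq_blk (U : Matrix (Fin 2) (Fin 2) ℂ) : ctrl U = blk 1 U := rfl

lemma blk_mul (M N M' N' : Matrix (Fin 2) (Fin 2) ℂ) :
    blk M N * blk M' N' = blk (M * M') (N * N') := by
  ext ⟨a, b⟩ ⟨c, d⟩
  fin_cases a <;> fin_cases c <;>
    simp [blk, Matrix.mul_apply, Fintype.sum_prod_type]

lemma kron_diag (e : ℂ) (A : Matrix (Fin 2) (Fin 2) ℂ) :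
    (!![1, 0; 0, e] ⊗ₖ A) = blk A (e • A) := by
  ext ⟨a, b⟩ ⟨c, d⟩
  fin_cases a <;> fin_cases c <;> simp [blk]

lemma kron_one (A : Matrix (Fin 2) (Fin 2) ℂ) :
    ((1 : Matrix (Fin 2) (Fin 2) ℂ) ⊗ₖ A) = blk A A := by
  ext ⟨a, b⟩ ⟨c, d⟩
  fin_cases a <;> fin_cases c <;> simp [blk]

lemma Rz_mul (a b : ℝ) : Rz a * Rz b = Rz (a + b) := by
  ext i j
  fin_cases i <;> fin_cases j <;> simp [Rz, ← Complex.exp_add] <;> ring_nf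

lemma Ry_mul (a b : ℝ) : Ry a * Ry b = Ry (a + b) := by
  have h : (a + b) / 2 = a / 2 + b / 2 := by ring
  unfold Ry
  rw [h, Real.cos_add, Real.sin_add]
  ext i j
  fin_cases i <;> fin_cases j <;> simp <;> ring

lemma Rz_zero : Rz 0 = 1 := by
  ext i j
  fin_cases i <;> fin_cases j <;> simp [Rz]

lemma Ry_zero : Ry 0 = 1 := by
  ext i j
  fin_cases i <;> fin_cases j <;> simp [Ry]

lemma X_Ry (a : ℝ) : X * Ry a = Ry (-a) * X := by
  ext i j
  fin_cases i <;> fin_cases j <;> simp [X, Ry, neg_div]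

lemma X_Rz (a : ℝ) : X * Rz a = Rz (-a) * X := by
  ext i j
  fin_cases i <;> fin_cases j <;> simp [X, Rz, neg_div]

lemma X_X : X * X = 1 := by
  ext i j
  fin_cases i <;> fin_cases j <;> simp [X]

theorem controlled_U_decomposition (α β γ δ : ℝ) :
    ctrl (Complex.exp ((α : ℂ) * Complex.I) • (Rz β * Ry γ * Rz δ)) =
      (!![1, 0; 0, Complex.exp ((α : ℂ) * Complex.I)] ⊗ₖ (Rz β * Ry (γ/2))) * CNOT *
        ((1 : Matrix (Fin 2) (Fin 2) ℂ) ⊗ₖ (Ry (-γ/2) * Rz (-(δ+β)/2))) * CNOT *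
        ((1 : Matrix (Fin 2) (Fin 2) ℂ) ⊗ₖ Rz ((δ-β)/2)) := by
  rw [CNOT, kron_diag, kron_one, kron_one]
  simp only [ctrl_eq_blk, blk_mul, mul_one]
  congr 1
  · have h1 : Rz β * Ry (γ/2) * (Ry (-γ/2) * Rz (-(δ+β)/2)) * Rz ((δ-β)/2)
        = Rz β * (Ry (γ/2) * Ry (-γ/2)) * (Rz (-(δ+β)/2) * Rz ((δ-β)/2)) := by
      simp only [mul_assoc]
    rw [h1, Ry_mul, Rz_mul, show γ/2 + -γ/2 = 0 by ring, Ry_zero, mul_one, Rz_mul,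
      show β + (-(δ+β)/2 + (δ-β)/2) = 0 by ring, Rz_zero]
  · have h2 : X * (Ry (-γ/2) * Rz (-(δ+β)/2)) * X = Ry (γ/2) * Rz ((δ+β)/2) := by
      rw [← mul_assoc, X_Ry, mul_assoc (Ry _), X_Rz, mul_assoc, mul_assoc, X_X, mul_one]
      congr 2 <;> ring
    have h3 : Rz β * Ry (γ/2) * X * (Ry (-γ/2) * Rz (-(δ+β)/2)) * X * Rz ((δ-β)/2)
        = Rz β * Ry γ * Rz δ := by
      calc _ = Rz β * Ry (γ/2) * (X * (Ry (-γ/2) * Rz (-(δ+β)/2)) * X) * Rz ((δ-β)/2) := by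
            simp only [mul_assoc]
        _ = Rz β * (Ry (γ/2) * Ry (γ/2)) * (Rz ((δ+β)/2) * Rz ((δ-β)/2)) := by
            rw [h2]; simp only [mul_assoc]
        _ = _ := by
            rw [Ry_mul, Rz_mul]
            congr 2
            · congr 1; ring
            · ring
    rw [← h3]
    simp only [smul_mul_assoc]

end
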